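/- In the diffusive regime 0 ≤ p < 3/4, for any α ∈ (0,1), letting t_{1−α/2} be the (1−α/2)-quantile of the standard Gaussian distribution, the coverage probability ℙ( p ∈ [ p̂_n − t_{1−α/2}·√(3 − 4 p̂_n)/(2√(log n)), p̂_n + t_{1−α/2}·√(3 − 4 p̂_n)/(2√(log n)) ] ) converges to 1 − α as n → ∞. -/

import Mathlib

open MeasureTheory ProbabilityTheory Filter Finset
open scoped BoundedContinuousFunction ENNReal NNReal Topology

noncomputable section

variable {Ω : Type*}

/-- Position of the elephant random walk: `S n = X 1 + ⋯ + X n`. -/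
def erwS (X : ℕ → Ω → ℝ) (n : ℕ) (ω : Ω) : ℝ :=
  ∑ k ∈ Finset.Icc 1 n, X k ω

/-- `V n = 4 ∑_{k=1}^{n-1} (S k / k)²`, the approximate conditional Fisher information. -/
def erwV (X : ℕ → Ω → ℝ) (n : ℕ) (ω : Ω) : ℝ :=
  4 * ∑ k ∈ Finset.Icc 1 (n - 1), (erwS X k ω / k) ^ 2

/-- The quasi-maximum likelihood estimator `p̂ n` of the memory parameter. -/
def erwPhat (X : ℕ → Ω → ℝ) (n : ℕ) (ω : Ω) : ℝ :=
  (∑ k ∈ Finset.Icc 1 (n - 1), (erwS X k ω / k) * (X (k + 1) ω + erwS X k ω / k)) /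
    (2 * ∑ k ∈ Finset.Icc 1 (n - 1), (erwS X k ω / k) ^ 2)

/-- The elephant random walk hypotheses with memory parameter `p ∈ [0,1]`:
the steps take values in `{-1, 1}`, are adapted to the filtration `ℱ`
(which plays the role of `σ(X_1, …, X_n)`), and
`E[X_{n+1} | ℱ_n] = (2p - 1) · S_n / n` almost surely. -/
def IsERW {m0 : MeasurableSpace Ω} (μ : Measure Ω) (ℱ : Filtration ℕ m0)
    (X : ℕ → Ω → ℝ) (p : ℝ) : Prop :=
  0 ≤ p ∧ p ≤ 1 ∧
  (∀ n, 1 ≤ n → ∀ ω, X n ω = 1 ∨ X n ω = -1) ∧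
  (∀ n, 1 ≤ n → Measurable[ℱ n] (X n)) ∧
  (∀ n, 1 ≤ n → μ[X (n + 1) | ℱ n] =ᵐ[μ] fun ω => (2 * p - 1) * (erwS X n ω / n))

/-!
Let `Y k = S k / k` and let `ε k = X (k + 1) - (2 p - 1) Y k` be the innovations. Then
`p̂ n - p = M n / (2 Q n)` with the martingale `M n = ∑ k < n, Y k ε k` and
`Q n = ∑ k < n, (Y k) ^ 2`. Telescoping `k (Y k) ^ 2` gives `(3 - 4 p) Q n = log n + o(log n)` in
probability. As `(ε k) ^ 2` differs from `1` by terms in `Y k` that only contribute `o(log n)`,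
the quadratic variation of `M` grows like `Q`.

The central limit theorem for `M` compares `exp (i S + ∑ (D k) ^ 2 / 2)` with the product
`∏ (1 + i D k)`, which has mean one for martingale differences `D k` with sum `S`; truncating `D`
when its accumulated quadratic variation exceeds a fixed level keeps both bounded. Hence
`2 √(log n) (p̂ n - p)` converges in law to `N(0, 3 - 4 p)`, and consistency of `p̂ n` allows the
variance to be replaced by its estimate.
-/

section ConvergenceInMeasure

variable {ι E F : Type*} {m0 : MeasurableSpace Ω} {μ : Measure Ω} {l : Filter ι}

lemma tendstoInMeasure_prodMk [PseudoMetricSpace E] [PseudoMetricSpace F] {f : ι → Ω → E}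
    {f' : Ω → E} {g : ι → Ω → F} {g' : Ω → F} (hf : TendstoInMeasure μ f l f')
    (hg : TendstoInMeasure μ g l g') :
    TendstoInMeasure μ (fun i ω => (f i ω, g i ω)) l fun ω => (f' ω, g' ω) := by
  rw [tendstoInMeasure_iff_dist] at *
  intro ε hε
  have hsum := (hf ε hε).add (hg ε hε)
  rw [add_zero] at hsum
  refine tendsto_of_tendsto_of_tendsto_of_le_of_le tendsto_const_nhds hsum (fun _ => zero_le)
    fun i => (measure_mono fun ω hω => ?_).trans (measure_union_le _ _)
  exact le_max_iff.1 (show ε ≤ max (dist _ _) (dist _ _) from hω)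

lemma tendstoInMeasure_continuousAt_comp_const [PseudoMetricSpace E] [PseudoMetricSpace F]
    {f : ι → Ω → E} {c : E} {φ : E → F} (hf : TendstoInMeasure μ f l fun _ => c)
    (hφ : ContinuousAt φ c) :
    TendstoInMeasure μ (fun i ω => φ (f i ω)) l fun _ => φ c := by
  rw [tendstoInMeasure_iff_dist] at *
  intro ε hε
  obtain ⟨δ, hδ, hφδ⟩ := Metric.continuousAt_iff.1 hφ ε hε
  refine tendsto_of_tendsto_of_tendsto_of_le_of_le tendsto_const_nhds (hf δ hδ)
    (fun _ => zero_le) fun i => measure_mono fun ω hω => ?_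
  exact not_lt.1 fun hlt => (hφδ hlt).not_ge hω

lemma tendstoInMeasure_of_tendsto_measure_ne [EDist E] {f g : ι → Ω → E} {f' : Ω → E}
    (hf : TendstoInMeasure μ f l f') (hfg : Tendsto (fun i => μ {ω | g i ω ≠ f i ω}) l (𝓝 0)) :
    TendstoInMeasure μ g l f' := by
  intro ε hε
  have hsum := (hf ε hε).add hfg
  rw [add_zero] at hsum
  refine tendsto_of_tendsto_of_tendsto_of_le_of_le tendsto_const_nhds hsum (fun _ => zero_le)
    fun i => (measure_mono fun ω hω => ?_).trans (measure_union_le _ _)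
  by_cases h : g i ω = f i ω
  · exact Or.inl (show ε ≤ edist (f i ω) (f' ω) from h ▸ hω)
  · exact Or.inr h

lemma tendstoInMeasure_zero_of_tendsto_integral_abs {f : ι → Ω → ℝ}
    (hf : ∀ i, Integrable (f i) μ) (hlim : Tendsto (fun i => ∫ ω, |f i ω| ∂μ) l (𝓝 0)) :
    TendstoInMeasure μ f l 0 := by
  refine tendstoInMeasure_of_tendsto_eLpNorm one_ne_zero
    (fun i => (hf i).aestronglyMeasurable) aestronglyMeasurable_zero ?_
  have hnorm : ∀ i, eLpNorm (f i - 0) 1 μ = ENNReal.ofReal (∫ ω, |f i ω| ∂μ) := fun i => by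
    rw [sub_zero, eLpNorm_one_eq_lintegral_enorm, ← ofReal_integral_norm_eq_lintegral_enorm (hf i)]
    rfl
  simpa only [hnorm, ENNReal.ofReal_zero] using ENNReal.tendsto_ofReal hlim

lemma tendstoInMeasure_zero_of_tendsto_integral_sq [IsFiniteMeasure μ] {f : ι → Ω → ℝ}
    (hf : ∀ i, MemLp (f i) 2 μ) (hlim : Tendsto (fun i => ∫ ω, f i ω ^ 2 ∂μ) l (𝓝 0)) :
    TendstoInMeasure μ f l 0 := by
  have hsq : TendstoInMeasure μ (fun i ω => f i ω ^ 2) l fun _ => 0 :=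
    tendstoInMeasure_zero_of_tendsto_integral_abs (fun i => (hf i).integrable_sq)
      (by simpa only [abs_sq] using hlim)
  rw [tendstoInMeasure_iff_norm] at hsq ⊢
  intro ε hε
  convert! hsq (ε ^ 2) (by positivity) using 5 with i ω
  simp [sq_le_sq, abs_of_pos hε]

lemma tendsto_integral_of_tendstoInMeasure_of_bounded [NormedAddCommGroup E] [NormedSpace ℝ E]
    [IsFiniteMeasure μ] [l.IsCountablyGenerated] {f : ι → Ω → E} {g : Ω → E} {C : ℝ}
    (hf : ∀ i, AEStronglyMeasurable (f i) μ) (hbdd : ∀ i ω, ‖f i ω‖ ≤ C)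
    (h : TendstoInMeasure μ f l g) :
    Tendsto (fun i => ∫ ω, f i ω ∂μ) l (𝓝 (∫ ω, g ω ∂μ)) := by
  refine tendsto_of_subseq_tendsto fun ns hns => ?_
  obtain ⟨ms, -, hms⟩ := (h.comp hns).exists_seq_tendsto_ae
  exact ⟨ms, tendsto_integral_of_dominated_convergence (fun _ => C) (fun i => hf _)
    (integrable_const C) (fun i => ae_of_all _ (hbdd _)) hms⟩

end ConvergenceInMeasure

section ExpComparison

lemma norm_cexp_add_half_sq_sub_one_add_le {x : ℝ} (hx : |x| ≤ 1) :
    ‖Complex.exp (x * Complex.I + x ^ 2 / 2) - (1 + x * Complex.I)‖ ≤ 2 * |x| ^ 3 := by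
  set z : ℂ := x * Complex.I + x ^ 2 / 2 with hz
  have hx0 : 0 ≤ |x| := abs_nonneg x
  have hz_norm : ‖z‖ ≤ 3 / 2 * |x| := by
    have : ‖z‖ ≤ ‖(x : ℂ) * Complex.I‖ + ‖(x : ℂ) ^ 2 / 2‖ := norm_add_le _ _
    simp only [norm_mul, norm_div, norm_pow, Complex.norm_real, Real.norm_eq_abs, Complex.norm_I,
      Complex.norm_ofNat] at this
    nlinarith
  have htaylor : ‖Complex.exp z - (1 + z + z ^ 2 / 2)‖ ≤ 9 / 8 * |x| ^ 3 := by
    have h := Complex.exp_bound' (x := z) (n := 3) (by norm_num; linarith)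
    simp only [sum_range_succ, sum_range_zero] at h
    norm_num [Nat.factorial] at h
    refine h.trans ?_
    have := pow_le_pow_left₀ (norm_nonneg z) hz_norm 3
    linarith [mul_pow (3 / 2) |x| 3]
  have hpoly : 1 + z + z ^ 2 / 2 - (1 + x * Complex.I)
      = (x : ℂ) ^ 3 * (Complex.I / 2 + x / 8) := by
    rw [hz]
    linear_combination (x ^ 2 / 2 : ℂ) * Complex.I_sq
  have hrest : ‖(x : ℂ) ^ 3 * (Complex.I / 2 + x / 8)‖ ≤ 5 / 8 * |x| ^ 3 := by
    have : ‖Complex.I / 2 + (x : ℂ) / 8‖ ≤ ‖Complex.I / 2‖ + ‖(x : ℂ) / 8‖ := norm_add_le _ _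
    simp only [norm_div, Complex.norm_real, Real.norm_eq_abs, Complex.norm_I,
      Complex.norm_ofNat] at this
    rw [norm_mul, norm_pow, Complex.norm_real, Real.norm_eq_abs, mul_comm]
    gcongr
    linarith
  calc ‖Complex.exp z - (1 + x * Complex.I)‖
      = ‖(Complex.exp z - (1 + z + z ^ 2 / 2)) + (x : ℂ) ^ 3 * (Complex.I / 2 + x / 8)‖ := by
        rw [← hpoly]; congr 1; ring
    _ ≤ 9 / 8 * |x| ^ 3 + 5 / 8 * |x| ^ 3 := norm_add_le_of_le htaylor hrest
    _ ≤ 2 * |x| ^ 3 := by nlinarith [pow_nonneg hx0 3]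

lemma norm_cexp_add_half_sq (x : ℝ) :
    ‖Complex.exp (x * Complex.I + x ^ 2 / 2)‖ = Real.exp (x ^ 2 / 2) := by
  have hre : ((x : ℂ) ^ 2).re = x ^ 2 := by rw [← Complex.ofReal_pow, Complex.ofReal_re]
  simp [Complex.norm_exp, hre]

lemma norm_one_add_mul_I_le (x : ℝ) : ‖1 + x * Complex.I‖ ≤ Real.exp (x ^ 2 / 2) := by
  have hsq : ‖1 + x * Complex.I‖ ^ 2 = x ^ 2 + 1 := by
    rw [← Complex.normSq_eq_norm_sq, ← Complex.ofReal_one, Complex.normSq_add_mul_I]; ring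
  refine le_of_sq_le_sq ?_ (Real.exp_pos _).le
  calc ‖1 + x * Complex.I‖ ^ 2 = x ^ 2 + 1 := hsq
    _ ≤ Real.exp (x ^ 2) := Real.add_one_le_exp _
    _ = Real.exp (x ^ 2 / 2) ^ 2 := by rw [← Real.exp_nat_mul]; congr 1; push_cast; ring

lemma norm_prod_sub_prod_le {ι R : Type*} [NormedCommRing R] [NormOneClass R]
    (s : Finset ι) {f g : ι → R} {c : ι → ℝ} (hc : ∀ i ∈ s, 1 ≤ c i)
    (hf : ∀ i ∈ s, ‖f i‖ ≤ c i) (hg : ∀ i ∈ s, ‖g i‖ ≤ c i) :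
    ‖∏ i ∈ s, f i - ∏ i ∈ s, g i‖ ≤ (∏ i ∈ s, c i) * ∑ i ∈ s, ‖f i - g i‖ := by
  classical
  induction s using Finset.induction_on with
  | empty => simp
  | insert j s hj ih =>
    simp only [mem_insert, forall_eq_or_imp] at hc hf hg
    have ih := ih hc.2 hf.2 hg.2
    have hprod : ‖∏ i ∈ s, g i‖ ≤ ∏ i ∈ s, c i :=
      (Finset.norm_prod_le _ _).trans (prod_le_prod (fun _ _ => norm_nonneg _) hg.2)
    have hP : 0 ≤ ∏ i ∈ s, c i := (norm_nonneg _).trans hprod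
    rw [prod_insert hj, prod_insert hj, prod_insert hj, sum_insert hj]
    calc ‖f j * ∏ i ∈ s, f i - g j * ∏ i ∈ s, g i‖
        = ‖f j * (∏ i ∈ s, f i - ∏ i ∈ s, g i) + (f j - g j) * ∏ i ∈ s, g i‖ := by
          congr 1; ring
      _ ≤ c j * ((∏ i ∈ s, c i) * ∑ i ∈ s, ‖f i - g i‖) + ‖f j - g j‖ * ∏ i ∈ s, c i :=
          norm_add_le_of_le
            (norm_mul_le_of_le hf.1 ih) (norm_mul_le_of_le le_rfl hprod)
      _ ≤ c j * ((∏ i ∈ s, c i) * ∑ i ∈ s, ‖f i - g i‖)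
          + c j * (‖f j - g j‖ * ∏ i ∈ s, c i) :=
          add_le_add le_rfl (le_mul_of_one_le_left (mul_nonneg (norm_nonneg _) hP) hc.1)
      _ = c j * (∏ i ∈ s, c i) * (‖f j - g j‖ + ∑ i ∈ s, ‖f i - g i‖) := by ring

lemma norm_cexp_sum_sub_prod_one_add_le {ι : Type*} (s : Finset ι) {x : ι → ℝ}
    (hx : ∀ i ∈ s, |x i| ≤ 1) :
    ‖Complex.exp (∑ i ∈ s, (x i * Complex.I + (x i) ^ 2 / 2)) - ∏ i ∈ s, (1 + x i * Complex.I)‖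
      ≤ Real.exp ((∑ i ∈ s, x i ^ 2) / 2) * ∑ i ∈ s, 2 * |x i| ^ 3 := by
  rw [Complex.exp_sum, sum_div, Real.exp_sum]
  refine (norm_prod_sub_prod_le s (c := fun i => Real.exp (x i ^ 2 / 2))
    (fun i _ => Real.one_le_exp (by positivity)) (fun i _ => (norm_cexp_add_half_sq _).le)
    fun i _ => norm_one_add_mul_I_le _).trans ?_
  gcongr with i hi
  exact norm_cexp_add_half_sq_sub_one_add_le (hx i hi)

end ExpComparison

/-- A sequence of martingale differences, each of them bounded; `d k` is the increment between
times `k` and `k + 1`. -/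
structure IsBoundedMartingaleDifference {m0 : MeasurableSpace Ω} (μ : Measure Ω)
    (ℱ : Filtration ℕ m0) (d : ℕ → Ω → ℝ) : Prop where
  stronglyMeasurable : ∀ k, StronglyMeasurable[ℱ (k + 1)] (d k)
  bounded : ∀ k, ∃ C, ∀ ω, |d k ω| ≤ C
  condExp_eq_zero : ∀ k, μ[d k | ℱ k] =ᵐ[μ] 0

namespace IsBoundedMartingaleDifference

variable {m0 : MeasurableSpace Ω} {μ : Measure Ω} {ℱ : Filtration ℕ m0} {d : ℕ → Ω → ℝ}

lemma stronglyMeasurable_sum (h : IsBoundedMartingaleDifference μ ℱ d) (n : ℕ) :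
    StronglyMeasurable[ℱ n] fun ω => ∑ k ∈ range n, d k ω :=
  Finset.stronglyMeasurable_fun_sum _ fun k hk =>
    (h.stronglyMeasurable k).mono (ℱ.mono (mem_range.1 hk))

lemma stronglyMeasurable_sum_sq (h : IsBoundedMartingaleDifference μ ℱ d) (n : ℕ) :
    StronglyMeasurable[ℱ n] fun ω => ∑ k ∈ range n, d k ω ^ 2 :=
  Finset.stronglyMeasurable_fun_sum _ fun k hk =>
    ((h.stronglyMeasurable k).mono (ℱ.mono (mem_range.1 hk))).pow 2

lemma measurable (h : IsBoundedMartingaleDifference μ ℱ d) (k : ℕ) : Measurable (d k) :=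
  ((h.stronglyMeasurable k).mono (ℱ.le _)).measurable

variable {E : Type*} [NormedAddCommGroup E] [NormedSpace ℝ E] {k : ℕ} {g : Ω → E}

lemma integrable_smul (h : IsBoundedMartingaleDifference μ ℱ d) (hg : Integrable g μ) :
    Integrable (d k • g) μ :=
  let ⟨C, hC⟩ := h.bounded k
  hg.bdd_smul C (h.measurable k).aestronglyMeasurable (ae_of_all _ hC)

variable [IsFiniteMeasure μ]

lemma memLp (h : IsBoundedMartingaleDifference μ ℱ d) (k : ℕ) (q : ℝ≥0∞) : MemLp (d k) q μ :=
  let ⟨C, hC⟩ := h.bounded k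
  .of_bound (h.measurable k).aestronglyMeasurable C (ae_of_all _ hC)

lemma memLp_sum (h : IsBoundedMartingaleDifference μ ℱ d) (n : ℕ) (q : ℝ≥0∞) :
    MemLp (fun ω => ∑ k ∈ range n, d k ω) q μ :=
  memLp_finsetSum _ fun k _ => h.memLp k q

lemma condExp_smul_eq_zero [CompleteSpace E] (h : IsBoundedMartingaleDifference μ ℱ d)
    (hg : StronglyMeasurable[ℱ k] g) (hg_int : Integrable g μ) :
    μ[d k • g | ℱ k] =ᵐ[μ] 0 := by
  filter_upwards [condExp_smul_of_aestronglyMeasurable_right ((h.memLp k 1).integrable le_rfl)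
    (h.integrable_smul hg_int) hg.aestronglyMeasurable, h.condExp_eq_zero k] with ω hpull hzero
  rw [hpull, Pi.smul_apply', hzero, Pi.zero_apply, zero_smul, Pi.zero_apply]

lemma integral_smul_eq_zero [CompleteSpace E] (h : IsBoundedMartingaleDifference μ ℱ d)
    (hg : StronglyMeasurable[ℱ k] g) (hg_int : Integrable g μ) : ∫ ω, d k ω • g ω ∂μ = 0 :=
  calc ∫ ω, d k ω • g ω ∂μ = ∫ ω, (μ[d k • g | ℱ k]) ω ∂μ := (integral_condExp (ℱ.le k)).symm
    _ = 0 := integral_eq_zero_of_ae (h.condExp_smul_eq_zero hg hg_int)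

lemma mul_predictable (h : IsBoundedMartingaleDifference μ ℱ d) {c : ℕ → Ω → ℝ}
    (hc : ∀ k, StronglyMeasurable[ℱ k] (c k)) (hc_bdd : ∀ k, ∃ C, ∀ ω, |c k ω| ≤ C) :
    IsBoundedMartingaleDifference μ ℱ fun k ω => c k ω * d k ω where
  stronglyMeasurable k := ((hc k).mono (ℱ.mono k.le_succ)).mul (h.stronglyMeasurable k)
  bounded k := by
    obtain ⟨C, hC⟩ := hc_bdd k
    obtain ⟨D, hD⟩ := h.bounded k
    refine ⟨C * D, fun ω => ?_⟩
    rw [abs_mul]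
    exact mul_le_mul (hC ω) (hD ω) (abs_nonneg _) ((abs_nonneg _).trans (hC ω))
  condExp_eq_zero k := by
    obtain ⟨C, hC⟩ := hc_bdd k
    have hc_int : Integrable (c k) μ :=
      .of_bound ((hc k).mono (ℱ.le k)).aestronglyMeasurable C (ae_of_all _ hC)
    simpa only [mul_comm] using! h.condExp_smul_eq_zero (hc k) hc_int

lemma const_mul (h : IsBoundedMartingaleDifference μ ℱ d) (r : ℝ) :
    IsBoundedMartingaleDifference μ ℱ fun k ω => r * d k ω :=
  h.mul_predictable (fun _ => stronglyMeasurable_const) fun _ => ⟨|r|, fun _ => le_rfl⟩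

lemma integral_sum_sq (h : IsBoundedMartingaleDifference μ ℱ d) (n : ℕ) :
    ∫ ω, (∑ k ∈ range n, d k ω) ^ 2 ∂μ = ∑ k ∈ range n, ∫ ω, d k ω ^ 2 ∂μ := by
  induction n with
  | zero => simp
  | succ n ih =>
    have hS := h.memLp_sum n
    have hcross : ∫ ω, d n ω * (2 * ∑ k ∈ range n, d k ω) ∂μ = 0 :=
      h.integral_smul_eq_zero ((h.stronglyMeasurable_sum n).const_mul 2)
        (((hS 1).integrable le_rfl).const_mul 2)
    have hcross_int : Integrable (fun ω => d n ω * (2 * ∑ k ∈ range n, d k ω)) μ :=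
      h.integrable_smul (((hS 1).integrable le_rfl).const_mul 2)
    have hsum_int : Integrable (fun ω => (∑ k ∈ range n, d k ω) ^ 2
        + d n ω * (2 * ∑ k ∈ range n, d k ω)) μ := (hS 2).integrable_sq.add hcross_int
    calc ∫ ω, (∑ k ∈ range (n + 1), d k ω) ^ 2 ∂μ
        = ∫ ω, (∑ k ∈ range n, d k ω) ^ 2 + d n ω * (2 * ∑ k ∈ range n, d k ω)
            + d n ω ^ 2 ∂μ := by
          refine integral_congr_ae (ae_of_all _ fun ω => ?_)
          simp only [sum_range_succ]
          ring
      _ = ∑ k ∈ range (n + 1), ∫ ω, d k ω ^ 2 ∂μ := by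
          rw [integral_add hsum_int (h.memLp n 2).integrable_sq,
            integral_add (hS 2).integrable_sq hcross_int, hcross, add_zero, ih, sum_range_succ]

lemma integral_prod_one_add [IsProbabilityMeasure μ] (h : IsBoundedMartingaleDifference μ ℱ d)
    (z : ℂ) (n : ℕ) : ∫ ω, ∏ k ∈ range n, (1 + d k ω * z) ∂μ = 1 := by
  have hmeas : ∀ n, StronglyMeasurable[ℱ n] fun ω => ∏ k ∈ range n, (1 + d k ω * z) := fun n =>
    Finset.stronglyMeasurable_fun_prod _ fun k hk => stronglyMeasurable_const.add <|
      (Complex.continuous_ofReal.comp_stronglyMeasurable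
        ((h.stronglyMeasurable k).mono (ℱ.mono (mem_range.1 hk)))).mul_const z
  have hstep : ∀ n, (fun ω => ∏ k ∈ range (n + 1), (1 + d k ω * z))
      = (fun ω => ∏ k ∈ range n, (1 + d k ω * z))
        + d n • fun ω => (∏ k ∈ range n, (1 + d k ω * z)) * z := fun n => by
    funext ω
    simp only [prod_range_succ, Pi.add_apply, Pi.smul_apply', Complex.real_smul]
    ring
  suffices Integrable (fun ω => ∏ k ∈ range n, (1 + d k ω * z)) μ ∧
      ∫ ω, ∏ k ∈ range n, (1 + d k ω * z) ∂μ = 1 from this.2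
  induction n with
  | zero => simp
  | succ n ih =>
    have hint := ih.1.mul_const z
    have hzero := h.integral_smul_eq_zero ((hmeas n).mul_const z) hint
    rw [hstep]
    exact ⟨ih.1.add (h.integrable_smul hint), by
      rw [integral_add' ih.1 (h.integrable_smul hint), ih.2]
      simpa using hzero⟩

end IsBoundedMartingaleDifference

section Truncation

/-- The martingale differences `d`, switched off from the first time at which the sum of the
squares of the past ones exceeds `K`. -/
def truncatedDifference (d : ℕ → Ω → ℝ) (K : ℝ) (k : ℕ) (ω : Ω) : ℝ :=
  (if ∑ j ∈ range k, d j ω ^ 2 ≤ K then 1 else 0) * d k ω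

lemma abs_truncatedDifference_le (d : ℕ → Ω → ℝ) (K : ℝ) (k : ℕ) (ω : Ω) :
    |truncatedDifference d K k ω| ≤ |d k ω| := by
  unfold truncatedDifference
  split_ifs <;> simp

lemma sum_sq_truncatedDifference_le {d : ℕ → Ω → ℝ} {K D : ℝ} {ω : Ω} (hK : 0 ≤ K)
    (hD : ∀ k, |d k ω| ≤ D) (n : ℕ) :
    ∑ k ∈ range n, truncatedDifference d K k ω ^ 2 ≤ K + D ^ 2 := by
  induction n with
  | zero =>
    rw [range_zero, sum_empty]
    positivity
  | succ n ih =>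
    rw [sum_range_succ]
    by_cases hn : ∑ j ∈ range n, d j ω ^ 2 ≤ K
    · have hpast : ∑ k ∈ range n, truncatedDifference d K k ω ^ 2 ≤ K := hn.trans' <|
        sum_le_sum fun k _ => sq_le_sq.2 (abs_truncatedDifference_le d K k ω)
      have hlast : truncatedDifference d K n ω ^ 2 ≤ D ^ 2 :=
        sq_le_sq' (neg_le_of_abs_le ((abs_truncatedDifference_le d K n ω).trans (hD n)))
          (le_of_abs_le ((abs_truncatedDifference_le d K n ω).trans (hD n)))
      exact add_le_add hpast hlast
    · simpa [truncatedDifference, hn] using ih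

lemma truncatedDifference_eq_self {d : ℕ → Ω → ℝ} {K : ℝ} {n k : ℕ} {ω : Ω}
    (hK : ∑ j ∈ range n, d j ω ^ 2 ≤ K) (hk : k ∈ range n) :
    truncatedDifference d K k ω = d k ω := by
  have hpast : ∑ j ∈ range k, d j ω ^ 2 ≤ K := hK.trans' <|
    sum_le_sum_of_subset_of_nonneg (range_subset_range.2 (mem_range.1 hk).le)
      fun _ _ _ => sq_nonneg _
  rw [truncatedDifference, if_pos hpast, one_mul]

lemma isBoundedMartingaleDifference_truncatedDifference {m0 : MeasurableSpace Ω} {μ : Measure Ω}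
    [IsFiniteMeasure μ] {ℱ : Filtration ℕ m0} {d : ℕ → Ω → ℝ}
    (h : IsBoundedMartingaleDifference μ ℱ d) (K : ℝ) :
    IsBoundedMartingaleDifference μ ℱ (truncatedDifference d K) :=
  h.mul_predictable
    (fun k => .ite ((h.stronglyMeasurable_sum_sq k).measurable measurableSet_Iic)
      stronglyMeasurable_const stronglyMeasurable_const)
    fun k => ⟨1, fun ω => by split_ifs <;> simp⟩

end Truncation

section MartingaleCLT

variable {m0 : MeasurableSpace Ω} {μ : Measure Ω}

lemma norm_integral_cexp_sum_sub_one_le [IsProbabilityMeasure μ] {ℱ : Filtration ℕ m0}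
    {d : ℕ → Ω → ℝ} (h : IsBoundedMartingaleDifference μ ℱ d) {n : ℕ} {δ K : ℝ} (hδ : δ ≤ 1)
    (hd : ∀ k ω, |d k ω| ≤ δ) (hK : ∀ ω, ∑ k ∈ range n, d k ω ^ 2 ≤ K) :
    ‖∫ ω, Complex.exp (∑ k ∈ range n, (d k ω * Complex.I + (d k ω) ^ 2 / 2)) ∂μ - 1‖
      ≤ Real.exp (K / 2) * (2 * δ * K) := by
  have hcubes : ∀ ω, ∑ k ∈ range n, 2 * |d k ω| ^ 3 ≤ 2 * δ * K := fun ω =>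
    calc ∑ k ∈ range n, 2 * |d k ω| ^ 3 ≤ ∑ k ∈ range n, 2 * δ * d k ω ^ 2 := by
          refine sum_le_sum fun k _ => ?_
          rw [pow_succ', ← sq_abs (d k ω), ← mul_assoc]
          gcongr
          exact hd k ω
      _ = 2 * δ * ∑ k ∈ range n, d k ω ^ 2 := (mul_sum _ _ _).symm
      _ ≤ 2 * δ * K := by
          have hδ0 : 0 ≤ δ := (abs_nonneg _).trans (hd 0 ω)
          gcongr
          exact hK ω
  have hbound : ∀ ω, ‖Complex.exp (∑ k ∈ range n, (d k ω * Complex.I + (d k ω) ^ 2 / 2))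
      - ∏ k ∈ range n, (1 + d k ω * Complex.I)‖ ≤ Real.exp (K / 2) * (2 * δ * K) := fun ω => by
    refine (norm_cexp_sum_sub_prod_one_add_le _ fun k _ => (hd k ω).trans hδ).trans ?_
    gcongr
    · exact hK ω
    · exact hcubes ω
  have hd_meas := h.measurable
  have hprod := h.integral_prod_one_add Complex.I n
  have hprod_int := Integrable.of_integral_ne_zero (hprod.trans_ne one_ne_zero)
  have hdiff_int := Integrable.of_bound (μ := μ)
    (f := fun ω => Complex.exp (∑ k ∈ range n, (d k ω * Complex.I + (d k ω) ^ 2 / 2))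
      - ∏ k ∈ range n, (1 + d k ω * Complex.I))
    (by fun_prop) _ (ae_of_all _ hbound)
  have hexp_int := (hdiff_int.add hprod_int).congr (ae_of_all _ fun ω => sub_add_cancel _ _)
  rw [← hprod, ← integral_sub hexp_int hprod_int]
  simpa using norm_integral_le_of_norm_le_const (ae_of_all μ hbound)

lemma tendsto_integral_cexp_of_compensated [IsFiniteMeasure μ] {S Q : ℕ → Ω → ℝ} {v K : ℝ}
    (hS : ∀ n, Measurable (S n)) (hQ : ∀ n, Measurable (Q n)) (hK : ∀ n ω, Q n ω ≤ K)
    (hv : TendstoInMeasure μ Q atTop fun _ => v)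
    (hcomp : Tendsto (fun n => ∫ ω, Complex.exp (S n ω * Complex.I + Q n ω / 2) ∂μ) atTop (𝓝 1)) :
    Tendsto (fun n => ∫ ω, Complex.exp (S n ω * Complex.I) ∂μ) atTop
      (𝓝 (Complex.exp (-(v / 2)))) := by
  set F : ℕ → Ω → ℂ := fun n ω => Complex.exp (S n ω * Complex.I)
    * ((Real.exp (v / 2) - Real.exp (Q n ω / 2) : ℝ) : ℂ) with hF
  have hF_bdd : ∀ n ω, ‖F n ω‖ ≤ Real.exp (v / 2) + Real.exp (K / 2) := fun n ω => by
    rw [hF, norm_mul, Complex.norm_exp_ofReal_mul_I, one_mul, Complex.norm_real]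
    refine (norm_sub_le _ _).trans ?_
    rw [Real.norm_of_nonneg (Real.exp_pos _).le, Real.norm_of_nonneg (Real.exp_pos _).le]
    gcongr
    exact hK n ω
  have hF_meas : TendstoInMeasure μ F atTop fun _ => 0 := by
    have hQ_exp := tendstoInMeasure_continuousAt_comp_const hv
      (φ := fun q => Real.exp (v / 2) - Real.exp (q / 2)) (by fun_prop)
    rw [tendstoInMeasure_iff_norm] at hQ_exp ⊢
    simpa only [hF, sub_self, sub_zero, norm_mul, Complex.norm_exp_ofReal_mul_I, one_mul,
      Complex.norm_real] using hQ_exp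
  have hF_lim : Tendsto (fun n => ∫ ω, F n ω ∂μ) atTop (𝓝 0) := by
    simpa using tendsto_integral_of_tendstoInMeasure_of_bounded
      (fun n => (by fun_prop : Measurable (F n)).aestronglyMeasurable) hF_bdd hF_meas
  have hlim := (hcomp.add hF_lim).mul_const (Complex.exp (-(v / 2)))
  rw [add_zero, one_mul] at hlim
  refine hlim.congr fun n => ?_
  have hcomp_int : Integrable (fun ω => Complex.exp (S n ω * Complex.I + Q n ω / 2)) μ := by
    refine .of_bound (by fun_prop) (Real.exp (K / 2)) (ae_of_all _ fun ω => ?_)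
    simpa [Complex.norm_exp] using div_le_div_of_nonneg_right (hK n ω) zero_le_two
  rw [← integral_add hcomp_int (.of_bound (by fun_prop) _ (ae_of_all _ (hF_bdd n))),
    ← integral_mul_const]
  refine integral_congr_ae (ae_of_all _ fun ω => ?_)
  simp only [hF, Complex.exp_add, Complex.exp_neg, Complex.ofReal_sub, Complex.ofReal_exp]
  push_cast
  field_simp
  ring

variable [IsProbabilityMeasure μ] {N : ℕ → ℕ} {ℱ : ℕ → Filtration ℕ m0} {d : ℕ → ℕ → Ω → ℝ}
  {δ : ℕ → ℝ}

lemma tendsto_integral_cexp_sum {v K : ℝ}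
    (h : ∀ n, IsBoundedMartingaleDifference μ (ℱ n) (d n)) (hd : ∀ n k ω, |d n k ω| ≤ δ n)
    (hδ : Tendsto δ atTop (𝓝 0)) (hK : ∀ n ω, ∑ k ∈ range (N n), d n k ω ^ 2 ≤ K)
    (hv : TendstoInMeasure μ (fun n ω => ∑ k ∈ range (N n), d n k ω ^ 2) atTop fun _ => v) :
    Tendsto (fun n => ∫ ω, Complex.exp ((∑ k ∈ range (N n), d n k ω : ℝ) * Complex.I) ∂μ) atTop
      (𝓝 (Complex.exp (-(v / 2)))) := by
  have hd_meas := fun n => (h n).measurable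
  refine tendsto_integral_cexp_of_compensated (fun n => by fun_prop) (fun n => by fun_prop) hK hv ?_
  rw [tendsto_iff_norm_sub_tendsto_zero]
  have hlim : Tendsto (fun n => Real.exp (K / 2) * (2 * δ n * K)) atTop (𝓝 0) := by
    simpa using ((hδ.const_mul 2).mul_const K).const_mul (Real.exp (K / 2))
  refine squeeze_zero' (.of_forall fun _ => norm_nonneg _) ?_ hlim
  filter_upwards [hδ.eventually_le_const zero_lt_one] with n hn
  simpa [sum_add_distrib, sum_mul, sum_div] using
    norm_integral_cexp_sum_sub_one_le (h n) hn (hd n) (hK n)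

variable {Ω' : Type*} {m0' : MeasurableSpace Ω'} {μ' : Measure Ω'} [IsProbabilityMeasure μ']
  {Z : Ω' → ℝ} {v : ℝ≥0}

lemma tendstoInDistribution_sum_of_sum_sq_le {K : ℝ}
    (h : ∀ n, IsBoundedMartingaleDifference μ (ℱ n) (d n)) (hd : ∀ n k ω, |d n k ω| ≤ δ n)
    (hδ : Tendsto δ atTop (𝓝 0)) (hK : ∀ n ω, ∑ k ∈ range (N n), d n k ω ^ 2 ≤ K)
    (hv : TendstoInMeasure μ (fun n ω => ∑ k ∈ range (N n), d n k ω ^ 2) atTop fun _ => (v : ℝ))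
    (hZ : HasLaw Z (gaussianReal 0 v) μ') :
    TendstoInDistribution (fun n ω => ∑ k ∈ range (N n), d n k ω) atTop Z (fun _ => μ) μ' := by
  have hS : ∀ n, Measurable fun ω => ∑ k ∈ range (N n), d n k ω := fun n =>
    Finset.measurable_fun_sum _ fun k _ => (h n).measurable k
  refine ⟨fun n => (hS n).aemeasurable, hZ.aemeasurable,
    ProbabilityMeasure.tendsto_iff_tendsto_charFun.2 fun u => ?_⟩
  have hscaled_sq := tendstoInMeasure_continuousAt_comp_const hv
    (φ := fun q => u ^ 2 * q) (by fun_prop)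
  have hlim := tendsto_integral_cexp_sum (K := u ^ 2 * K) (fun n => (h n).const_mul u)
    (δ := fun n => |u| * δ n)
    (fun n k ω => by rw [abs_mul]; gcongr; exact hd n k ω) (by simpa using hδ.const_mul |u|)
    (fun n ω => by simpa only [mul_pow, ← mul_sum] using
      mul_le_mul_of_nonneg_left (hK n ω) (sq_nonneg u))
    (by simpa only [mul_pow, ← mul_sum] using hscaled_sq)
  convert! hlim using 1
  · funext n
    simp only [ProbabilityMeasure.coe_mk]
    rw [charFun_apply_real, integral_map (hS n).aemeasurable (by fun_prop)]
    simp only [← mul_sum, Complex.ofReal_mul]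
  · simp only [ProbabilityMeasure.coe_mk]
    rw [hZ.map_eq, charFun_gaussianReal]
    push_cast
    ring_nf

theorem tendstoInDistribution_sum_martingaleDifference
    (h : ∀ n, IsBoundedMartingaleDifference μ (ℱ n) (d n)) (hd : ∀ n k ω, |d n k ω| ≤ δ n)
    (hδ : Tendsto δ atTop (𝓝 0))
    (hv : TendstoInMeasure μ (fun n ω => ∑ k ∈ range (N n), d n k ω ^ 2) atTop fun _ => (v : ℝ))
    (hZ : HasLaw Z (gaussianReal 0 v) μ') :
    TendstoInDistribution (fun n ω => ∑ k ∈ range (N n), d n k ω) atTop Z (fun _ => μ) μ' := by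
  set e : ℕ → ℕ → Ω → ℝ := fun n => truncatedDifference (d n) (v + 1)
  obtain ⟨D, hD⟩ := hδ.bddAbove_range
  have hlarge : Tendsto (fun n => μ {ω | ¬ ∑ k ∈ range (N n), d n k ω ^ 2 ≤ v + 1}) atTop
      (𝓝 0) := by
    refine tendsto_of_tendsto_of_tendsto_of_le_of_le tendsto_const_nhds
      (tendstoInMeasure_iff_dist.1 hv 1 one_pos) (fun _ => zero_le) fun n => measure_mono ?_
    intro ω hω
    exact (le_sub_iff_add_le'.2 (not_le.1 hω).le).trans (le_abs_self _)
  have hne : ∀ φ : ℝ → ℝ, Tendsto (fun n => μ {ω | ∑ k ∈ range (N n), φ (e n k ω)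
      ≠ ∑ k ∈ range (N n), φ (d n k ω)}) atTop (𝓝 0) := fun φ =>
    tendsto_of_tendsto_of_tendsto_of_le_of_le tendsto_const_nhds hlarge (fun _ => zero_le)
      fun n => measure_mono fun ω hω hle => hω <| sum_congr rfl fun k hk =>
        congrArg φ (truncatedDifference_eq_self hle hk)
  have he_sq := tendstoInMeasure_of_tendsto_measure_ne hv (hne (· ^ 2))
  have he := tendstoInDistribution_sum_of_sum_sq_le (K := v + 1 + D ^ 2)
    (fun n => isBoundedMartingaleDifference_truncatedDifference (h n) (v + 1))
    (fun n k ω => (abs_truncatedDifference_le _ _ k ω).trans (hd n k ω)) hδ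
    (fun n ω => sum_sq_truncatedDifference_le (by positivity)
      (fun k => (hd n k ω).trans (hD ⟨n, rfl⟩)) _) he_sq hZ
  refine tendstoInDistribution_of_tendstoInMeasure_sub _ _ he ?_ fun n =>
    (Finset.measurable_fun_sum _ fun k _ => (h n).measurable k).aemeasurable
  refine tendstoInMeasure_of_tendsto_measure_ne (f := fun _ => 0)
    (tendstoInMeasure_of_tendsto_ae (fun _ => aestronglyMeasurable_zero)
      (ae_of_all _ fun _ => tendsto_const_nhds)) ?_
  exact (hne id).congr fun n => congrArg μ <| Set.ext fun ω =>
    ne_comm.trans sub_ne_zero.symm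

end MartingaleCLT

section Portmanteau

variable {ι Ω' : Type*} {m0 : MeasurableSpace Ω} {μ : Measure Ω} [IsProbabilityMeasure μ]
  {m' : MeasurableSpace Ω'} {μ' : Measure Ω'} [IsProbabilityMeasure μ'] {l : Filter ι}

lemma tendsto_measureReal_preimage_of_tendstoInDistribution {E : Type*} [MeasurableSpace E]
    [TopologicalSpace E] [HasOuterApproxClosed E] [BorelSpace E] {f : ι → Ω → E} {Z : Ω' → E}
    {s : Set E} (hf : TendstoInDistribution f l Z (fun _ => μ) μ') (hs : MeasurableSet s)
    (hnull : μ' (Z ⁻¹' frontier s) = 0) :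
    Tendsto (fun i => μ.real (f i ⁻¹' s)) l (𝓝 (μ'.real (Z ⁻¹' s))) := by
  rw [← Measure.map_apply_of_aemeasurable hf.aemeasurable_limit
    isClosed_frontier.measurableSet] at hnull
  have : IsProbabilityMeasure (μ'.map Z) := Measure.isProbabilityMeasure_map hf.aemeasurable_limit
  have hmap := (ENNReal.tendsto_toReal (measure_ne_top (μ'.map Z) s)).comp
    (ProbabilityMeasure.tendsto_measure_of_null_frontier_of_tendsto' hf.tendsto hnull)
  simpa only [Function.comp_def, ProbabilityMeasure.coe_mk, measureReal_def,
    Measure.map_apply_of_aemeasurable (hf.forall_aemeasurable _) hs,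
    Measure.map_apply_of_aemeasurable hf.aemeasurable_limit hs] using hmap

end Portmanteau

section Gaussian

lemma gaussianReal_real_Ici_neg (v : ℝ≥0) (t : ℝ) :
    (gaussianReal 0 v).real (Set.Ici (-t)) = (gaussianReal 0 v).real (Set.Iic t) := by
  have hneg : (gaussianReal 0 v).map (fun x => -x) = gaussianReal 0 v := by
    rw [gaussianReal_map_neg, neg_zero]
  rw [← hneg, map_measureReal_apply measurable_neg measurableSet_Ici, hneg]
  congr 1
  ext z
  simp only [Set.mem_preimage, Set.mem_Ici, Set.mem_Iic, neg_le_neg_iff]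

lemma gaussianReal_real_abs_le {v : ℝ≥0} {α t : ℝ} (hα : α < 1)
    (ht : (gaussianReal 0 v).real (Set.Iic t) = 1 - α / 2) :
    (gaussianReal 0 v).real {z | |z| ≤ t} = 1 - α := by
  have hset : {z : ℝ | |z| ≤ t} = Set.Ici (-t) ∩ Set.Iic t := Set.ext fun _ => by
    simp only [Set.mem_ofPred_eq, Set.mem_inter_iff, Set.mem_Ici, Set.mem_Iic, abs_le]
  have hsum := measureReal_union_add_inter (μ := gaussianReal 0 v) (s := Set.Ici (-t))
    (measurableSet_Iic (a := t))
  rw [gaussianReal_real_Ici_neg, ht, ← hset] at hsum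
  rcases le_or_gt 0 t with ht0 | ht0
  · have huniv : Set.Ici (-t) ∪ Set.Iic t = Set.univ :=
      Set.eq_univ_of_forall fun z => (le_total (-t) z).imp_right fun h => show z ≤ t by linarith
    rw [huniv, probReal_univ] at hsum
    linarith
  · have hempty : {z : ℝ | |z| ≤ t} = ∅ :=
      Set.eq_empty_of_forall_notMem fun z hz => ((abs_nonneg z).trans hz).not_gt ht0
    rw [hempty, measureReal_empty] at hsum
    linarith [measureReal_le_one (μ := gaussianReal 0 v) (s := Set.Ici (-t) ∪ Set.Iic t)]

lemma hasLaw_const_mul_gaussianReal (c : ℝ) (v : ℝ≥0) :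
    HasLaw (fun z => c * z) (gaussianReal 0 (.mk (c ^ 2) (sq_nonneg c) * v))
      (gaussianReal 0 v) where
  map_eq := by rw [gaussianReal_map_const_mul, mul_zero]

theorem tendsto_measureReal_abs_le_mul_sqrt {m0 : MeasurableSpace Ω} {μ : Measure Ω}
    [IsProbabilityMeasure μ] {U V : ℕ → Ω → ℝ} {v : ℝ≥0} {α t : ℝ} (hv : v ≠ 0) (hα : α < 1)
    (ht : (gaussianReal 0 1).real (Set.Iic t) = 1 - α / 2)
    (hU : TendstoInDistribution U atTop id (fun _ => μ) (gaussianReal 0 v))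
    (hV : TendstoInMeasure μ V atTop fun _ => (v : ℝ)) (hV_meas : ∀ n, AEMeasurable (V n) μ) :
    Tendsto (fun n => μ.real {ω | |U n ω| ≤ t * √(V n ω)}) atTop (𝓝 (1 - α)) := by
  have hσ : 0 < √(v : ℝ) := Real.sqrt_pos.2 (by positivity)
  have hdistr := hU.continuous_comp_prodMk_of_tendstoInMeasure_const
    (g := fun z : ℝ × ℝ => |z.1| - t * √z.2) (by fun_prop) hV hV_meas
  have : NullSingletonClass (gaussianReal 0 v) := nullSingletonClass_gaussianReal hv
  have hnull : gaussianReal 0 v ((fun z : ℝ => |id z| - t * √v) ⁻¹' frontier (Set.Iic 0)) = 0 := by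
    refine measure_mono_null (t := {t * √v, -(t * √v)}) (fun z hz => ?_)
      (Set.Finite.measure_zero (by simp) _)
    rw [frontier_Iic] at hz
    exact eq_or_eq_neg_of_abs_eq (sub_eq_zero.1 hz)
  have hlim := tendsto_measureReal_preimage_of_tendstoInDistribution hdistr measurableSet_Iic hnull
  have hstd : (gaussianReal 0 v).real {z | |z| ≤ t * √v} = 1 - α := by
    have hlaw := hasLaw_const_mul_gaussianReal (√v) 1
    have hvar : NNReal.mk (√(v : ℝ) ^ 2) (sq_nonneg _) * 1 = v := by
      rw [mul_one]
      exact NNReal.eq (Real.sq_sqrt v.2)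
    rw [hvar] at hlaw
    rw [← gaussianReal_real_abs_le hα ht, ← hlaw.measureReal_eq (by measurability)]
    simp only [abs_mul, abs_of_pos hσ, mul_comm t, mul_le_mul_iff_right₀ hσ]
  simpa only [Set.preimage, Set.mem_Iic, sub_nonpos, id, hstd] using hlim

end Gaussian

section Growth

lemma exists_le_mul_pow_succ_of_le {u : ℕ → ℝ} {c B : ℝ} {q : ℕ} (hu : ∀ n, 0 ≤ u n)
    (hc : c < q + 1) (hrec : ∀ n : ℕ, 1 ≤ n → u (n + 1) ≤ (1 + c / n) * u n + B * n ^ q) :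
    ∃ D, ∀ n : ℕ, 1 ≤ n → u n ≤ D * n ^ (q + 1) := by
  set e := max c 0
  have he : 0 < (q : ℝ) + 1 - e := sub_pos.2 (max_lt hc (by positivity))
  set D := max (u 1) (B / (q + 1 - e))
  have hD0 : 0 ≤ D := (hu 1).trans (le_max_left _ _)
  have hDB : B ≤ D * (q + 1 - e) := (div_le_iff₀ he).1 (le_max_right _ _)
  refine ⟨D, fun n hn => Nat.le_induction (by simp [D]) (fun n hn ih => ?_) n hn⟩
  have hn0 : (0 : ℝ) < n := by exact_mod_cast hn
  calc u (n + 1) ≤ (1 + c / n) * u n + B * n ^ q := hrec n hn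
    _ ≤ (1 + e / n) * u n + B * n ^ q := by
        gcongr
        exacts [hu n, le_max_left _ _]
    _ ≤ (1 + e / n) * (D * n ^ (q + 1)) + D * (q + 1 - e) * n ^ q := by
        have : 0 ≤ e := le_max_right _ _
        gcongr
    _ = D * (n ^ (q + 1) + (q + 1) * n ^ q) := by field_simp; ring
    _ ≤ D * (n + 1 : ℕ) ^ (q + 1) := by
        gcongr
        simpa using pow_add_mul_le_add_pow hn0.le (b := 1) (by positivity) (q + 1)

lemma tendsto_log_natCast_atTop : Tendsto (fun n : ℕ => Real.log n) atTop atTop :=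
  Real.tendsto_log_atTop.comp tendsto_natCast_atTop_atTop

lemma tendsto_sum_range_inv_div_log :
    Tendsto (fun n : ℕ => (∑ k ∈ range n, ((k : ℝ) + 1)⁻¹) / Real.log n) atTop (𝓝 1) := by
  have hsub := (Real.tendsto_harmonic_sub_log.div_atTop tendsto_log_natCast_atTop).add_const 1
  rw [zero_add] at hsub
  refine hsub.congr' ?_
  filter_upwards [tendsto_log_natCast_atTop.eventually_ne_atTop 0] with n hn
  rw [sub_div, div_self hn, sub_add_cancel, harmonic]
  push_cast
  rfl

end Growth

section Rescaling

variable {m0 : MeasurableSpace Ω} {μ : Measure Ω}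

lemma tendstoInMeasure_div_atTop_of_integral_abs_le {ι : Type*} {l : Filter ι} {f : ι → Ω → ℝ}
    {r : ι → ℝ} {C : ℝ} (hf : ∀ i, Integrable (f i) μ) (hC : ∀ i, ∫ ω, |f i ω| ∂μ ≤ C)
    (hr : Tendsto r l atTop) : TendstoInMeasure μ (fun i ω => f i ω / r i) l 0 := by
  refine tendstoInMeasure_zero_of_tendsto_integral_abs (fun i => (hf i).div_const _) ?_
  refine squeeze_zero' (.of_forall fun i => integral_nonneg fun ω => abs_nonneg _) ?_
    (hr.const_div_atTop C)
  filter_upwards [hr.eventually_gt_atTop 0] with i hi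
  simp only [abs_div, abs_of_pos hi, integral_div]
  gcongr
  exact hC i

lemma tendstoInMeasure_sum_div_log_of_integral_le {f : ℕ → Ω → ℝ} {C : ℝ}
    (hf : ∀ k, Integrable (f k) μ) (hf0 : ∀ k ω, 0 ≤ f k ω)
    (hC : ∀ k : ℕ, ∫ ω, f k ω ∂μ ≤ C * ((k : ℝ) + 1)⁻¹ ^ 2) :
    TendstoInMeasure μ (fun n ω => (∑ k ∈ range n, f k ω) / Real.log n) atTop 0 := by
  have hsum : Summable fun k : ℕ => C * ((k : ℝ) + 1)⁻¹ ^ 2 := by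
    simpa using ((summable_nat_add_iff 1).2 (Real.summable_nat_pow_inv.2 one_lt_two)).mul_left C
  refine tendstoInMeasure_div_atTop_of_integral_abs_le
    (C := ∑' k : ℕ, C * ((k : ℝ) + 1)⁻¹ ^ 2) (fun n => integrable_finsetSum _ fun k _ => hf k)
    (fun n => ?_) tendsto_log_natCast_atTop
  simp only [abs_of_nonneg (sum_nonneg fun k _ => hf0 k _)]
  rw [integral_finsetSum _ fun k _ => hf k]
  exact (sum_le_sum fun k _ => hC k).trans (hsum.sum_le_tsum _ fun k _ =>
    (integral_nonneg (hf0 k)).trans (hC k))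

end Rescaling

/-- The empirical mean `S k / k` of the first `k` steps; it is `0` for `k = 0`. -/
def erwMean (X : ℕ → Ω → ℝ) (k : ℕ) (ω : Ω) : ℝ :=
  erwS X k ω / k

/-- The part `X (k + 1) - E[X (k + 1) | ℱ k]` of the step at time `k + 1` which the past does not
predict. It is set to `0` for `k = 0`, the law of `X 1` being arbitrary. -/
def erwInnovation (X : ℕ → Ω → ℝ) (p : ℝ) (k : ℕ) (ω : Ω) : ℝ :=
  if k = 0 then 0 else X (k + 1) ω - (2 * p - 1) * erwMean X k ω

lemma erwS_succ (X : ℕ → Ω → ℝ) (n : ℕ) (ω : Ω) :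
    erwS X (n + 1) ω = erwS X n ω + X (n + 1) ω :=
  sum_Icc_succ_top (by omega) _

lemma natCast_mul_erwMean (X : ℕ → Ω → ℝ) (k : ℕ) (ω : Ω) :
    k * erwMean X k ω = erwS X k ω := by
  rcases eq_or_ne k 0 with rfl | hk
  · simp [erwS]
  · exact mul_div_cancel₀ _ (Nat.cast_ne_zero.2 hk)

lemma erwMean_mul_step (X : ℕ → Ω → ℝ) (p : ℝ) (k : ℕ) (ω : Ω) :
    erwMean X k ω * X (k + 1) ω =
      erwMean X k ω * erwInnovation X p k ω + (2 * p - 1) * erwMean X k ω ^ 2 := by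
  rcases eq_or_ne k 0 with rfl | hk
  · simp [erwMean]
  · rw [erwInnovation, if_neg hk]
    ring

lemma exists_integral_erwMean_pow_le {m0 : MeasurableSpace Ω} {μ : Measure Ω} {X : ℕ → Ω → ℝ}
    {j : ℕ} (hj : j ≠ 0) {D : ℝ}
    (hD : ∀ k : ℕ, 1 ≤ k → ∫ ω, erwS X k ω ^ (2 * j) ∂μ ≤ D * k ^ j) :
    ∃ C, ∀ k : ℕ, ∫ ω, erwMean X k ω ^ (2 * j) ∂μ ≤ C * ((k : ℝ) + 1)⁻¹ ^ j := by
  have hD0 : 0 ≤ D := by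
    have := (integral_nonneg fun ω => (even_two_mul j).pow_nonneg (erwS X 1 ω)).trans (hD 1 le_rfl)
    simpa using this
  refine ⟨2 ^ j * D, fun k => ?_⟩
  rcases k.eq_zero_or_pos with rfl | hk
  · simp [erwMean, hj, hD0]
  have hk' : (1 : ℝ) ≤ k := by exact_mod_cast hk
  calc ∫ ω, erwMean X k ω ^ (2 * j) ∂μ = (∫ ω, erwS X k ω ^ (2 * j) ∂μ) / k ^ (2 * j) := by
        simp only [erwMean, div_pow, integral_div]
    _ ≤ D * k ^ j / k ^ (2 * j) := by
        gcongr
        exact hD k hk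
    _ = D * (k : ℝ)⁻¹ ^ j := by
        rw [two_mul, pow_add, inv_pow]
        field_simp
    _ ≤ D * (2 * ((k : ℝ) + 1)⁻¹) ^ j := by
        gcongr
        rw [← div_eq_mul_inv, inv_le_comm₀ (by positivity) (by positivity), inv_div]
        linarith
    _ = 2 ^ j * D * ((k : ℝ) + 1)⁻¹ ^ j := by ring

namespace IsERW

variable {m0 : MeasurableSpace Ω} {μ : Measure Ω} {ℱ : Filtration ℕ m0} {X : ℕ → Ω → ℝ} {p : ℝ}

lemma measurable_step (h : IsERW μ ℱ X p) {k : ℕ} (hk : 1 ≤ k) : Measurable[ℱ k] (X k) :=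
  h.2.2.2.1 k hk

lemma condExp_step (h : IsERW μ ℱ X p) {k : ℕ} (hk : 1 ≤ k) :
    μ[X (k + 1) | ℱ k] =ᵐ[μ] fun ω => (2 * p - 1) * erwMean X k ω :=
  h.2.2.2.2 k hk

lemma abs_eq_one (h : IsERW μ ℱ X p) {k : ℕ} (hk : 1 ≤ k) (ω : Ω) : |X k ω| = 1 :=
  (abs_eq zero_le_one).2 (h.2.2.1 k hk ω)

lemma sq_eq_one (h : IsERW μ ℱ X p) {k : ℕ} (hk : 1 ≤ k) (ω : Ω) : X k ω ^ 2 = 1 := by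
  rw [← sq_abs, h.abs_eq_one hk, one_pow]

lemma abs_erwMean_le_one (h : IsERW μ ℱ X p) (k : ℕ) (ω : Ω) : |erwMean X k ω| ≤ 1 := by
  have hS : |erwS X k ω| ≤ k :=
    calc |erwS X k ω| ≤ ∑ j ∈ Icc 1 k, |X j ω| := abs_sum_le_sum_abs _ _
      _ = ∑ j ∈ Icc 1 k, 1 := sum_congr rfl fun j hj => h.abs_eq_one (mem_Icc.1 hj).1 ω
      _ = k := by simp
  rw [erwMean, abs_div, Nat.abs_cast]
  exact div_le_one_of_le₀ hS k.cast_nonneg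

lemma abs_innovation_le_two (h : IsERW μ ℱ X p) (k : ℕ) (ω : Ω) :
    |erwInnovation X p k ω| ≤ 2 := by
  rw [erwInnovation]
  split_ifs
  · simp
  · have ha : |2 * p - 1| ≤ 1 := abs_le.2 ⟨by linarith [h.1], by linarith [h.2.1]⟩
    calc |X (k + 1) ω - (2 * p - 1) * erwMean X k ω|
        ≤ |X (k + 1) ω| + |2 * p - 1| * |erwMean X k ω| := by
          rw [← abs_mul]
          exact abs_sub _ _
      _ ≤ 1 + 1 * 1 := by
          gcongr
          exacts [(h.abs_eq_one k.succ_pos ω).le, h.abs_erwMean_le_one k ω]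
      _ = 2 := by norm_num

lemma sum_erwMean_sq_eq (h : IsERW μ ℱ X p) (n : ℕ) (ω : Ω) :
    (3 - 4 * p) * ∑ k ∈ range n, erwMean X k ω ^ 2 =
      ∑ k ∈ range n, ((k : ℝ) + 1)⁻¹ - n * erwMean X n ω ^ 2
      + ∑ k ∈ range n, 2 * k / (k + 1) * erwMean X k ω * erwInnovation X p k ω
      + (3 - 4 * p) * ∑ k ∈ range n, erwMean X k ω ^ 2 / (k + 1) := by
  induction n with
  | zero => simp
  | succ n ih =>
    have hmean : erwMean X (n + 1) ω = (n * erwMean X n ω + X (n + 1) ω) / (n + 1) := by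
      rw [natCast_mul_erwMean, ← erwS_succ, erwMean, Nat.cast_succ]
    simp only [sum_range_succ, mul_add, ih, hmean]
    push_cast
    field_simp
    linear_combination (2 * n : ℝ) * erwMean_mul_step X p n ω + h.sq_eq_one n.succ_pos ω

lemma stronglyMeasurable_erwS (h : IsERW μ ℱ X p) (k : ℕ) :
    StronglyMeasurable[ℱ k] (erwS X k) :=
  stronglyMeasurable_fun_sum _ fun _ hj =>
    ((h.measurable_step (mem_Icc.1 hj).1).mono (ℱ.mono (mem_Icc.1 hj).2) le_rfl).stronglyMeasurable

lemma stronglyMeasurable_erwMean (h : IsERW μ ℱ X p) (k : ℕ) :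
    StronglyMeasurable[ℱ k] (erwMean X k) := by
  simpa only [div_eq_mul_inv] using! (h.stronglyMeasurable_erwS k).mul_const (k : ℝ)⁻¹

lemma measurable_erwMean (h : IsERW μ ℱ X p) (k : ℕ) : Measurable (erwMean X k) :=
  ((h.stronglyMeasurable_erwMean k).mono (ℱ.le k)).measurable

lemma measurable_erwPhat (h : IsERW μ ℱ X p) (n : ℕ) : Measurable (erwPhat X n) := by
  have hY := h.measurable_erwMean
  have hX : ∀ k, Measurable (X (k + 1)) := fun k =>
    (h.measurable_step k.succ_pos).mono (ℱ.le _) le_rfl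
  unfold erwMean at hY
  unfold erwPhat
  fun_prop

section MartingaleDifferences

variable [IsFiniteMeasure μ]

lemma isBoundedMartingaleDifference_innovation (h : IsERW μ ℱ X p) :
    IsBoundedMartingaleDifference μ ℱ (erwInnovation X p) where
  stronglyMeasurable k := by
    unfold erwInnovation
    split_ifs
    · exact stronglyMeasurable_const
    · exact (h.measurable_step k.succ_pos).stronglyMeasurable.sub
        (((h.stronglyMeasurable_erwMean k).mono (ℱ.mono k.le_succ)).const_mul _)
  bounded k := ⟨2, h.abs_innovation_le_two k⟩
  condExp_eq_zero k := by
    rcases eq_or_ne k 0 with rfl | hk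
    · exact condExp_zero.eventuallyEq
    have hX : Integrable (X (k + 1)) μ :=
      .of_bound ((h.measurable_step k.succ_pos).mono (ℱ.le _) le_rfl).aestronglyMeasurable 1
        (ae_of_all _ fun ω => (h.abs_eq_one k.succ_pos ω).le)
    have hY_meas := (h.stronglyMeasurable_erwMean k).const_mul (2 * p - 1)
    have hY : Integrable (fun ω => (2 * p - 1) * erwMean X k ω) μ :=
      (Integrable.of_bound (h.measurable_erwMean k).aestronglyMeasurable 1
        (ae_of_all _ (h.abs_erwMean_le_one k))).const_mul _
    have hε : erwInnovation X p k = X (k + 1) - fun ω => (2 * p - 1) * erwMean X k ω :=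
      funext fun ω => if_neg hk
    filter_upwards [condExp_sub hX hY (ℱ k), h.condExp_step (Nat.one_le_iff_ne_zero.2 hk)]
      with ω hsub hstep
    rw [hε, hsub, Pi.sub_apply, hstep, condExp_of_stronglyMeasurable (ℱ.le k) hY_meas hY]
    exact sub_self _

lemma isBoundedMartingaleDifference_mul_innovation (h : IsERW μ ℱ X p) {c : ℕ → Ω → ℝ} {K : ℝ}
    (hc : ∀ k, StronglyMeasurable[ℱ k] (c k)) (hcK : ∀ k ω, |c k ω| ≤ K) :
    IsBoundedMartingaleDifference μ ℱ fun k ω => c k ω * erwInnovation X p k ω :=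
  h.isBoundedMartingaleDifference_innovation.mul_predictable hc fun k => ⟨K, hcK k⟩

lemma integrable_erwS_pow (h : IsERW μ ℱ X p) (k j : ℕ) :
    Integrable (fun ω => erwS X k ω ^ j) μ := by
  refine .of_bound (((h.stronglyMeasurable_erwS k).mono (ℱ.le k)).pow j).aestronglyMeasurable
    ((k : ℝ) ^ j) (ae_of_all _ fun ω => ?_)
  rw [← natCast_mul_erwMean, norm_pow, norm_mul, RCLike.norm_natCast]
  gcongr
  exact mul_le_of_le_one_right k.cast_nonneg (h.abs_erwMean_le_one k ω)

lemma integrable_erwMean_pow (h : IsERW μ ℱ X p) (k j : ℕ) :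
    Integrable (fun ω => erwMean X k ω ^ j) μ := by
  simpa only [erwMean, div_pow] using (h.integrable_erwS_pow k j).div_const _

lemma integrable_innovation_mul_erwS_pow (h : IsERW μ ℱ X p) (k j : ℕ) :
    Integrable (fun ω => erwInnovation X p k ω * erwS X k ω ^ j) μ :=
  h.isBoundedMartingaleDifference_innovation.integrable_smul (h.integrable_erwS_pow k j)

lemma integral_innovation_mul_erwS_pow (h : IsERW μ ℱ X p) (k j : ℕ) :
    ∫ ω, erwInnovation X p k ω * erwS X k ω ^ j ∂μ = 0 :=
  h.isBoundedMartingaleDifference_innovation.integral_smul_eq_zero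
    ((h.stronglyMeasurable_erwS k).pow j) (h.integrable_erwS_pow k j)

end MartingaleDifferences

section Moments

variable [IsProbabilityMeasure μ]

lemma integral_erwS_succ_sq (h : IsERW μ ℱ X p) {k : ℕ} (hk : 1 ≤ k) :
    ∫ ω, erwS X (k + 1) ω ^ 2 ∂μ
      = (1 + 2 * (2 * p - 1) / k) * ∫ ω, erwS X k ω ^ 2 ∂μ + 1 := by
  have hstep : ∀ ω, erwS X (k + 1) ω ^ 2 = (1 + 2 * (2 * p - 1) / k) * erwS X k ω ^ 2
      + 2 * (erwInnovation X p k ω * erwS X k ω ^ 1) + 1 := fun ω => by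
    rw [erwS_succ, erwInnovation, if_neg (by omega), erwMean]
    linear_combination h.sq_eq_one k.succ_pos ω
  have hS := (h.integrable_erwS_pow k 2).const_mul (1 + 2 * (2 * p - 1) / (k : ℝ))
  have hε := (h.integrable_innovation_mul_erwS_pow k 1).const_mul 2
  simp only [hstep]
  rw [integral_add (hS.fun_add hε) (integrable_const _), integral_add hS hε, integral_const_mul,
    integral_const_mul, h.integral_innovation_mul_erwS_pow]
  simp

lemma integral_erwS_succ_pow_four (h : IsERW μ ℱ X p) {k : ℕ} (hk : 1 ≤ k) :
    ∫ ω, erwS X (k + 1) ω ^ 4 ∂μ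
      = (1 + 4 * (2 * p - 1) / k) * ∫ ω, erwS X k ω ^ 4 ∂μ
        + (6 + 4 * (2 * p - 1) / k) * ∫ ω, erwS X k ω ^ 2 ∂μ + 1 := by
  have hstep : ∀ ω, erwS X (k + 1) ω ^ 4 = (1 + 4 * (2 * p - 1) / k) * erwS X k ω ^ 4
      + (6 + 4 * (2 * p - 1) / k) * erwS X k ω ^ 2
      + (4 * (erwInnovation X p k ω * erwS X k ω ^ 3)
      + 4 * (erwInnovation X p k ω * erwS X k ω ^ 1)) + 1 := fun ω => by
    rw [erwS_succ, erwInnovation, if_neg (by omega), erwMean]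
    linear_combination (6 * erwS X k ω ^ 2 + 4 * erwS X k ω * X (k + 1) ω + X (k + 1) ω ^ 2 + 1)
      * h.sq_eq_one k.succ_pos ω
  have hS4 := (h.integrable_erwS_pow k 4).const_mul (1 + 4 * (2 * p - 1) / (k : ℝ))
  have hS2 := (h.integrable_erwS_pow k 2).const_mul (6 + 4 * (2 * p - 1) / (k : ℝ))
  have hε3 := (h.integrable_innovation_mul_erwS_pow k 3).const_mul 4
  have hε1 := (h.integrable_innovation_mul_erwS_pow k 1).const_mul 4
  simp only [hstep]
  rw [integral_add ((hS4.fun_add hS2).fun_add (hε3.fun_add hε1)) (integrable_const _),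
    integral_add (hS4.fun_add hS2) (hε3.fun_add hε1), integral_add hS4 hS2, integral_add hε3 hε1]
  simp only [integral_const_mul, h.integral_innovation_mul_erwS_pow]
  simp

lemma exists_integral_erwS_sq_le (h : IsERW μ ℱ X p) (hp : p < 3 / 4) :
    ∃ D, ∀ k : ℕ, 1 ≤ k → ∫ ω, erwS X k ω ^ 2 ∂μ ≤ D * k := by
  simpa only [zero_add, pow_one] using exists_le_mul_pow_succ_of_le (c := 2 * (2 * p - 1)) (B := 1)
    (q := 0) (u := fun k => ∫ ω, erwS X k ω ^ 2 ∂μ) (fun k => integral_nonneg fun ω => sq_nonneg _)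
    (by norm_num; linarith) fun k hk => by rw [h.integral_erwS_succ_sq hk, pow_zero, mul_one]

lemma exists_integral_erwS_pow_four_le (h : IsERW μ ℱ X p) (hp : p < 3 / 4) :
    ∃ D, ∀ k : ℕ, 1 ≤ k → ∫ ω, erwS X k ω ^ 4 ∂μ ≤ D * k ^ 2 := by
  obtain ⟨D, hD⟩ := h.exists_integral_erwS_sq_le hp
  refine exists_le_mul_pow_succ_of_le (c := 4 * (2 * p - 1)) (B := 10 * D + 1) (q := 1)
    (u := fun k => ∫ ω, erwS X k ω ^ 4 ∂μ) (fun k => integral_nonneg fun ω => by positivity)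
    (by norm_num; linarith) fun k hk => ?_
  have hk' : (1 : ℝ) ≤ k := by exact_mod_cast hk
  have hcoef : 6 + 4 * (2 * p - 1) / k ≤ 10 := by
    have : 4 * (2 * p - 1) / (k : ℝ) ≤ 4 := (div_le_iff₀ (by positivity)).2 (by linarith)
    linarith
  have : 0 ≤ ∫ ω, erwS X k ω ^ 2 ∂μ := integral_nonneg fun ω => sq_nonneg _
  rw [h.integral_erwS_succ_pow_four hk, pow_one, add_assoc]
  gcongr
  calc (6 + 4 * (2 * p - 1) / k) * ∫ ω, erwS X k ω ^ 2 ∂μ + 1 ≤ 10 * (D * k) + 1 * k := by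
        rw [one_mul]
        gcongr
        exact hD k hk
    _ = (10 * D + 1) * k := by ring

lemma exists_integral_erwMean_sq_le (h : IsERW μ ℱ X p) (hp : p < 3 / 4) :
    ∃ C, ∀ k : ℕ, ∫ ω, erwMean X k ω ^ 2 ∂μ ≤ C * ((k : ℝ) + 1)⁻¹ := by
  obtain ⟨D, hD⟩ := h.exists_integral_erwS_sq_le hp
  simpa using exists_integral_erwMean_pow_le one_ne_zero (by simpa using hD)

lemma exists_integral_erwMean_pow_four_le (h : IsERW μ ℱ X p) (hp : p < 3 / 4) :
    ∃ C, ∀ k : ℕ, ∫ ω, erwMean X k ω ^ 4 ∂μ ≤ C * ((k : ℝ) + 1)⁻¹ ^ 2 := by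
  obtain ⟨D, hD⟩ := h.exists_integral_erwS_pow_four_le hp
  exact exists_integral_erwMean_pow_le two_ne_zero hD

end Moments

section LawOfLargeNumbers

variable [IsProbabilityMeasure μ]

lemma tendstoInMeasure_sum_mul_innovation_div_log (h : IsERW μ ℱ X p) (hp : p < 3 / 4)
    {c : ℕ → Ω → ℝ} {K : ℝ} (hK : 0 ≤ K) (hc : ∀ k, StronglyMeasurable[ℱ k] (c k))
    (hcK : ∀ k ω, |c k ω| ≤ K * |erwMean X k ω|) :
    TendstoInMeasure μ
      (fun n ω => (∑ k ∈ range n, c k ω * erwInnovation X p k ω) / Real.log n) atTop 0 := by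
  obtain ⟨C, hC⟩ := h.exists_integral_erwMean_sq_le hp
  have hmart := h.isBoundedMartingaleDifference_mul_innovation hc fun k ω =>
    (hcK k ω).trans (mul_le_of_le_one_right hK (h.abs_erwMean_le_one k ω))
  have hterm : ∀ k, ∫ ω, (c k ω * erwInnovation X p k ω) ^ 2 ∂μ
      ≤ 4 * K ^ 2 * C * ((k : ℝ) + 1)⁻¹ := fun k =>
    calc ∫ ω, (c k ω * erwInnovation X p k ω) ^ 2 ∂μ
        ≤ ∫ ω, 4 * K ^ 2 * erwMean X k ω ^ 2 ∂μ := by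
          refine integral_mono (hmart.memLp k 2).integrable_sq
            ((h.integrable_erwMean_pow k 2).const_mul _) fun ω => ?_
          have habs : |c k ω * erwInnovation X p k ω| ≤ K * |erwMean X k ω| * 2 := by
            rw [abs_mul]
            exact mul_le_mul (hcK k ω) (h.abs_innovation_le_two k ω) (abs_nonneg _)
              (by positivity)
          calc (c k ω * erwInnovation X p k ω) ^ 2 ≤ (K * |erwMean X k ω| * 2) ^ 2 :=
                sq_le_sq.2 (habs.trans (le_abs_self _))
            _ = 4 * K ^ 2 * erwMean X k ω ^ 2 := by rw [mul_pow, mul_pow, sq_abs]; ring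
      _ ≤ 4 * K ^ 2 * C * ((k : ℝ) + 1)⁻¹ := by
          rw [integral_const_mul, mul_assoc (4 * K ^ 2)]
          gcongr
          exact hC k
  refine tendstoInMeasure_zero_of_tendsto_integral_sq (fun n => ?_) ?_
  · simpa only [div_eq_mul_inv] using! (hmart.memLp_sum n 2).mul_const (Real.log n)⁻¹
  have hbound := (tendsto_sum_range_inv_div_log.div_atTop tendsto_log_natCast_atTop).const_mul
    (4 * K ^ 2 * C)
  rw [mul_zero] at hbound
  refine squeeze_zero (fun n => integral_nonneg fun ω => sq_nonneg _) (fun n => ?_) hbound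
  simp only [div_pow, integral_div]
  rw [hmart.integral_sum_sq, div_div, ← sq, mul_div_assoc', mul_sum]
  gcongr with k
  exact hterm k

lemma tendstoInMeasure_sum_erwMean_mul_innovation_div_log (h : IsERW μ ℱ X p) (hp : p < 3 / 4) :
    TendstoInMeasure μ (fun n ω =>
      (∑ k ∈ range n, erwMean X k ω * erwInnovation X p k ω) / Real.log n) atTop 0 :=
  h.tendstoInMeasure_sum_mul_innovation_div_log hp zero_le_one h.stronglyMeasurable_erwMean
    fun _ _ => (one_mul _).ge

lemma tendstoInMeasure_natCast_mul_erwMean_sq_div_log (h : IsERW μ ℱ X p) (hp : p < 3 / 4) :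
    TendstoInMeasure μ (fun n ω => n * erwMean X n ω ^ 2 / Real.log n) atTop 0 := by
  obtain ⟨C, hC⟩ := h.exists_integral_erwMean_sq_le hp
  refine tendstoInMeasure_div_atTop_of_integral_abs_le (C := C)
    (fun n => (h.integrable_erwMean_pow n 2).const_mul _) (fun n => ?_) tendsto_log_natCast_atTop
  have : 0 ≤ C * ((n : ℝ) + 1)⁻¹ := (integral_nonneg fun ω => sq_nonneg _).trans (hC n)
  calc ∫ ω, |n * erwMean X n ω ^ 2| ∂μ = n * ∫ ω, erwMean X n ω ^ 2 ∂μ := by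
        simp only [abs_mul, Nat.abs_cast, abs_sq, integral_const_mul]
    _ ≤ (n + 1) * (C * ((n : ℝ) + 1)⁻¹) := by
        gcongr
        exacts [by linarith, hC n]
    _ = C := by field_simp

lemma tendstoInMeasure_sum_erwMean_sq_div_log (h : IsERW μ ℱ X p) (hp : p < 3 / 4) :
    TendstoInMeasure μ (fun n ω => (∑ k ∈ range n, erwMean X k ω ^ 2) / Real.log n) atTop
      fun _ => (3 - 4 * p)⁻¹ := by
  have hb : 3 - 4 * p ≠ 0 := by linarith
  obtain ⟨C, hC⟩ := h.exists_integral_erwMean_sq_le hp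
  have hharm : TendstoInMeasure μ
      (fun (n : ℕ) _ => (∑ k ∈ range n, ((k : ℝ) + 1)⁻¹) / Real.log n) atTop fun _ => 1 :=
    tendstoInMeasure_of_tendsto_ae (fun _ => aestronglyMeasurable_const)
      (ae_of_all _ fun _ => tendsto_sum_range_inv_div_log)
  have hmart := h.tendstoInMeasure_sum_mul_innovation_div_log hp zero_le_two
    (c := fun k ω => 2 * k / (k + 1) * erwMean X k ω)
    (fun k => (h.stronglyMeasurable_erwMean k).const_mul _) fun k ω => by
      rw [abs_mul, abs_of_nonneg (by positivity)]
      gcongr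
      rw [div_le_iff₀ (by positivity)]
      linarith
  have hrem := tendstoInMeasure_sum_div_log_of_integral_le (μ := μ) (C := C)
    (f := fun k ω => erwMean X k ω ^ 2 / (k + 1))
    (fun k => (h.integrable_erwMean_pow k 2).div_const _) (fun k ω => by positivity) fun k => by
      rw [integral_div, sq, ← mul_assoc, div_eq_mul_inv]
      gcongr
      exact hC k
  have hlim := tendstoInMeasure_continuousAt_comp_const
    (tendstoInMeasure_prodMk (tendstoInMeasure_prodMk hharm
      (h.tendstoInMeasure_natCast_mul_erwMean_sq_div_log hp)) (tendstoInMeasure_prodMk hmart hrem))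
    (c := ((1, 0), (0, 0)))
    (φ := fun z : (ℝ × ℝ) × (ℝ × ℝ) =>
      (3 - 4 * p)⁻¹ * (z.1.1 - z.1.2 + z.2.1 + (3 - 4 * p) * z.2.2)) (by fun_prop)
  simp only [sub_zero, add_zero, mul_zero, mul_one] at hlim
  refine hlim.congr_left fun n => ae_of_all _ fun ω => ?_
  dsimp only
  rw [mul_div_assoc', ← sub_div, ← add_div, ← add_div, ← h.sum_erwMean_sq_eq, mul_div_assoc,
    inv_mul_cancel_left₀ hb]

lemma tendstoInMeasure_sum_sq_erwMean_mul_innovation_div_log (h : IsERW μ ℱ X p)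
    (hp : p < 3 / 4) :
    TendstoInMeasure μ (fun n ω =>
      (∑ k ∈ range n, (erwMean X k ω * erwInnovation X p k ω) ^ 2) / Real.log n) atTop
      fun _ => (3 - 4 * p)⁻¹ := by
  obtain ⟨C, hC⟩ := h.exists_integral_erwMean_pow_four_le hp
  have hcube := h.tendstoInMeasure_sum_mul_innovation_div_log hp zero_le_one
    (c := fun k ω => erwMean X k ω ^ 3) (fun k => (h.stronglyMeasurable_erwMean k).pow 3)
    fun k ω => by
      rw [abs_pow, one_mul]
      exact pow_le_of_le_one (abs_nonneg _) (h.abs_erwMean_le_one k ω) three_ne_zero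
  have hquart := tendstoInMeasure_sum_div_log_of_integral_le (fun k => h.integrable_erwMean_pow k 4)
    (fun k ω => by positivity) hC
  have hlim := tendstoInMeasure_continuousAt_comp_const
    (tendstoInMeasure_prodMk (h.tendstoInMeasure_sum_erwMean_sq_div_log hp)
      (tendstoInMeasure_prodMk hcube hquart))
    (c := ((3 - 4 * p)⁻¹, (0, 0)))
    (φ := fun z : ℝ × (ℝ × ℝ) =>
      z.1 - 2 * (2 * p - 1) * z.2.1 - (2 * p - 1) ^ 2 * z.2.2) (by fun_prop)
  simp only [sub_zero, mul_zero] at hlim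
  refine hlim.congr_left fun n => ae_of_all _ fun ω => ?_
  dsimp only
  rw [mul_div_assoc', mul_div_assoc', ← sub_div, ← sub_div, mul_sum, mul_sum,
    ← sum_sub_distrib, ← sum_sub_distrib]
  congr 1
  refine sum_congr rfl fun k _ => ?_
  linear_combination (erwMean X k ω * X (k + 1) ω + erwMean X k ω * erwInnovation X p k ω
    + (2 * p - 1) * erwMean X k ω ^ 2) * erwMean_mul_step X p k ω
    - erwMean X k ω ^ 2 * h.sq_eq_one k.succ_pos ω

end LawOfLargeNumbers

end IsERW

section Estimator

lemma sum_Icc_one_sub_one_eq_sum_range {M : Type*} [AddCommMonoid M] {f : ℕ → M} (hf : f 0 = 0)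
    (n : ℕ) : ∑ k ∈ Icc 1 (n - 1), f k = ∑ k ∈ range n, f k := by
  refine sum_subset (fun k hk => ?_) fun k hk hk' => ?_
  · rw [mem_Icc] at hk
    exact mem_range.2 (by omega)
  · rw [mem_range] at hk
    rw [mem_Icc] at hk'
    rwa [show k = 0 by omega]

lemma erwPhat_sub_eq {X : ℕ → Ω → ℝ} {n : ℕ} {ω : Ω} (p : ℝ)
    (hpos : 0 < ∑ k ∈ range n, erwMean X k ω ^ 2) :
    erwPhat X n ω - p = (∑ k ∈ range n, erwMean X k ω * erwInnovation X p k ω)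
      / (2 * ∑ k ∈ range n, erwMean X k ω ^ 2) := by
  have hnum : ∑ k ∈ range n, erwMean X k ω * (X (k + 1) ω + erwMean X k ω)
      = ∑ k ∈ range n, erwMean X k ω * erwInnovation X p k ω
        + 2 * p * ∑ k ∈ range n, erwMean X k ω ^ 2 := by
    rw [mul_sum, ← sum_add_distrib]
    refine sum_congr rfl fun k _ => ?_
    linear_combination erwMean_mul_step X p k ω
  have hphat : erwPhat X n ω = (∑ k ∈ range n, erwMean X k ω * (X (k + 1) ω + erwMean X k ω))
      / (2 * ∑ k ∈ range n, erwMean X k ω ^ 2) := by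
    rw [← sum_Icc_one_sub_one_eq_sum_range (by simp [erwMean]),
      ← sum_Icc_one_sub_one_eq_sum_range (by simp [erwMean])]
    rfl
  rw [hphat, hnum]
  field_simp
  ring

namespace IsERW

variable {m0 : MeasurableSpace Ω} {μ : Measure Ω} {ℱ : Filtration ℕ m0} {X : ℕ → Ω → ℝ} {p : ℝ}

lemma sum_erwMean_sq_pos (h : IsERW μ ℱ X p) {n : ℕ} (hn : 2 ≤ n) (ω : Ω) :
    0 < ∑ k ∈ range n, erwMean X k ω ^ 2 := by
  refine sum_pos' (fun _ _ => sq_nonneg _) ⟨1, mem_range.2 hn, ?_⟩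
  simp [erwMean, erwS, h.sq_eq_one le_rfl ω]

variable [IsProbabilityMeasure μ]

theorem tendstoInMeasure_erwPhat (h : IsERW μ ℱ X p) (hp : p < 3 / 4) :
    TendstoInMeasure μ (erwPhat X) atTop fun _ => p := by
  have hlim := tendstoInMeasure_continuousAt_comp_const (tendstoInMeasure_prodMk
    (h.tendstoInMeasure_sum_erwMean_mul_innovation_div_log hp)
    (h.tendstoInMeasure_sum_erwMean_sq_div_log hp)) (c := (0, (3 - 4 * p)⁻¹))
    (φ := fun z : ℝ × ℝ => z.1 / (2 * z.2) + p) <| by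
      have : 2 * (3 - 4 * p)⁻¹ ≠ 0 := mul_ne_zero two_ne_zero (inv_ne_zero (by linarith))
      fun_prop (disch := assumption)
  simp only [zero_div, zero_add] at hlim
  refine hlim.congr' ?_ .rfl
  filter_upwards [eventually_ge_atTop 2] with n hn
  refine ae_of_all _ fun ω => ?_
  have hL : Real.log n ≠ 0 := (Real.log_pos (by exact_mod_cast hn)).ne'
  have hpos := h.sum_erwMean_sq_pos hn ω
  rw [← eq_sub_iff_add_eq, erwPhat_sub_eq p hpos]
  field_simp

theorem tendstoInDistribution_sum_erwMean_mul_innovation (h : IsERW μ ℱ X p) (hp : p < 3 / 4)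
    {Ω' : Type*} {m' : MeasurableSpace Ω'} {μ' : Measure Ω'} [IsProbabilityMeasure μ'] {Z : Ω' → ℝ}
    (hZ : HasLaw Z (gaussianReal 0 (3 - 4 * p).toNNReal⁻¹) μ') :
    TendstoInDistribution (fun n ω =>
      (∑ k ∈ range n, erwMean X k ω * erwInnovation X p k ω) / √(Real.log n))
      atTop Z (fun _ => μ) μ' := by
  have hb : 0 ≤ 3 - 4 * p := by linarith
  have hmart := h.isBoundedMartingaleDifference_mul_innovation h.stronglyMeasurable_erwMean
    h.abs_erwMean_le_one
  have hd : ∀ (n k : ℕ) ω, |(√(Real.log n))⁻¹ * (erwMean X k ω * erwInnovation X p k ω)|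
      ≤ (√(Real.log n))⁻¹ * (1 * 2) := fun n k ω => by
    rw [abs_mul, abs_mul, abs_of_nonneg (by positivity : 0 ≤ (√(Real.log n))⁻¹)]
    gcongr
    exacts [h.abs_erwMean_le_one k ω, h.abs_innovation_le_two k ω]
  have hδ : Tendsto (fun n : ℕ => (√(Real.log n))⁻¹ * (1 * 2)) atTop (𝓝 0) := by
    simpa using ((Real.tendsto_sqrt_atTop.comp
      tendsto_log_natCast_atTop).inv_tendsto_atTop).mul_const (1 * 2 : ℝ)
  have hvar : TendstoInMeasure μ (fun (n : ℕ) ω => ∑ k ∈ range n,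
      ((√(Real.log n))⁻¹ * (erwMean X k ω * erwInnovation X p k ω)) ^ 2) atTop
      fun _ => ((3 - 4 * p).toNNReal⁻¹ : ℝ≥0) := by
    simpa only [inv_mul_eq_div, div_pow, Real.sq_sqrt (Real.log_natCast_nonneg _), sum_div,
      NNReal.coe_inv, Real.coe_toNNReal _ hb]
      using h.tendstoInMeasure_sum_sq_erwMean_mul_innovation_div_log hp
  simpa only [inv_mul_eq_div, sum_div] using
    tendstoInDistribution_sum_martingaleDifference (fun n => hmart.const_mul _) hd hδ hvar hZ

theorem tendstoInDistribution_erwPhat (h : IsERW μ ℱ X p) (hp : p < 3 / 4) :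
    TendstoInDistribution (fun (n : ℕ) ω => 2 * √(Real.log n) * (erwPhat X n ω - p)) atTop id
      (fun _ => μ) (gaussianReal 0 (3 - 4 * p).toNNReal) := by
  have hb : 0 < 3 - 4 * p := by linarith
  have hZ : HasLaw (fun z => (3 - 4 * p)⁻¹ * z) (gaussianReal 0 (3 - 4 * p).toNNReal⁻¹)
      (gaussianReal 0 (3 - 4 * p).toNNReal) := by
    convert! hasLaw_const_mul_gaussianReal (3 - 4 * p)⁻¹ (3 - 4 * p).toNNReal using 2
    refine NNReal.eq ?_
    rw [NNReal.coe_inv, NNReal.coe_mul, NNReal.coe_mk, Real.coe_toNNReal _ hb.le]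
    field_simp
  have hinv := tendstoInMeasure_continuousAt_comp_const
    (h.tendstoInMeasure_sum_erwMean_sq_div_log hp)
    (continuousAt_inv₀ (inv_ne_zero hb.ne'))
  have hmeas := h.measurable_erwMean
  have hlim := (h.tendstoInDistribution_sum_erwMean_mul_innovation hp hZ)
    |>.continuous_comp_prodMk_of_tendstoInMeasure_const (g := fun z : ℝ × ℝ => z.1 * z.2)
      (by fun_prop) hinv fun n => by fun_prop
  refine hlim.congr (fun n => ae_of_all _ fun ω => ?_) (ae_of_all _ fun z => ?_)
  · rcases lt_or_ge n 2 with hn | hn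
    · interval_cases n <;> simp
    have hL : 0 < Real.log n := Real.log_pos (by exact_mod_cast hn)
    have hpos := h.sum_erwMean_sq_pos hn ω
    simp only [erwPhat_sub_eq p hpos]
    field_simp
    rw [Real.sq_sqrt hL.le]
  · simp only [inv_inv, id]
    field_simp

end IsERW

end Estimator

/-- Asymptotic confidence interval in the diffusive regime `0 ≤ p < 3/4`: the coverage
probability of `[p̂_n ± t_{1-α/2} √(3 - 4 p̂_n) / (2 √(log n))]` converges to `1 - α`. -/
theorem erw_confidence_interval_diffusive
    {m0 : MeasurableSpace Ω} (μ : Measure Ω) [IsProbabilityMeasure μ]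
    (ℱ : Filtration ℕ m0) (X : ℕ → Ω → ℝ) (p : ℝ)
    (hERW : IsERW μ ℱ X p) (hp : p < 3 / 4)
    (α t : ℝ) (hα : 0 < α) (hα' : α < 1)
    (ht : ((gaussianReal 0 1) (Set.Iic t)).toReal = 1 - α / 2) :
    Tendsto (fun n => (μ {ω | |erwPhat X n ω - p| ≤
        t * Real.sqrt (3 - 4 * erwPhat X n ω) / (2 * Real.sqrt (Real.log n))}).toReal)
      atTop (𝓝 (1 - α)) := by
  have hvar : TendstoInMeasure μ (fun n ω => 3 - 4 * erwPhat X n ω) atTop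
      fun _ => ((3 - 4 * p).toNNReal : ℝ) := by
    rw [Real.coe_toNNReal _ (by linarith)]
    exact tendstoInMeasure_continuousAt_comp_const (hERW.tendstoInMeasure_erwPhat hp)
      (φ := fun x => 3 - 4 * x) (by fun_prop)
  have hcover := tendsto_measureReal_abs_le_mul_sqrt (by simp; linarith) hα' ht
    (hERW.tendstoInDistribution_erwPhat hp) hvar
    fun n => ((hERW.measurable_erwPhat n).const_mul 4).const_sub 3 |>.aemeasurable
  refine hcover.congr' ?_
  filter_upwards [tendsto_log_natCast_atTop.eventually_gt_atTop 0] with n hn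
  have hscale : 0 < 2 * √(Real.log n) := by positivity
  simp only [abs_mul, abs_of_pos hscale, le_div_iff₀' hscale, measureReal_def]
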